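/- Type soundness of CG's forcing semantics at base type: If · ⊢ e : CG ℓ1 ℓ2 (bool) is derivable in CG and the execution of e under the forcing semantics from the empty heap terminates, then the resulting value is a boolean (true or false). -/

import Mathlib

/-!
Labels play no role in type soundness, and subtyping only changes labels. Erasing all labels
therefore turns CG into a simply typed calculus without subsumption (`CGSub.erase_eq`,
`CGTyped.erase`), in which every typing derivation can be inverted directly. The erased judgment
`ETyped S Γ e τ` carries a store typing `S`, so that locations arising at run time can be typed.

For the erased calculus the argument is the classical one. Weakening and substitution
(`ETyped.shift`, `ETyped.subst`) give preservation for pure evaluation (`ETyped.pure`), and then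
preservation for forcing (`ETyped.force`), where the store typing grows by appending at every
allocation. Independently of typing, pure evaluation and forcing only produce values
(`CGPure.val`, `CGForce.val`), and a closed value of boolean type is `tt` or `ff`.
-/

/-! ## Shared expression syntax for the FG and CG calculi (de Bruijn indices) -/

inductive Exp : Type where
  | var (n : ℕ)
  | lam (e : Exp)
  | app (e1 e2 : Exp)
  | pair (e1 e2 : Exp)
  | fst (e : Exp)
  | snd (e : Exp)
  | inl (e : Exp)
  | inr (e : Exp)
  | case (e e1 e2 : Exp)      -- the two branches each bind one variable
  | tt
  | ff
  | unit
  | loc (n : ℕ)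
  | new (e : Exp)
  | deref (e : Exp)
  | assign (e1 e2 : Exp)
  | label (e : Exp)
  | unlabel (e : Exp)
  | toLabeled (e : Exp)
  | ret (e : Exp)
  | bind (e1 e2 : Exp)        -- e2 binds one variable
deriving DecidableEq

namespace Exp

/-- Shift free de Bruijn indices `≥ c` up by one. -/
def shift (c : ℕ) : Exp → Exp
  | var n => if n < c then var n else var (n + 1)
  | lam e => lam (e.shift (c + 1))
  | app e1 e2 => app (e1.shift c) (e2.shift c)
  | pair e1 e2 => pair (e1.shift c) (e2.shift c)
  | fst e => fst (e.shift c)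
  | snd e => snd (e.shift c)
  | inl e => inl (e.shift c)
  | inr e => inr (e.shift c)
  | case e e1 e2 => case (e.shift c) (e1.shift (c + 1)) (e2.shift (c + 1))
  | tt => tt
  | ff => ff
  | unit => unit
  | loc n => loc n
  | new e => new (e.shift c)
  | deref e => deref (e.shift c)
  | assign e1 e2 => assign (e1.shift c) (e2.shift c)
  | label e => label (e.shift c)
  | unlabel e => unlabel (e.shift c)
  | toLabeled e => toLabeled (e.shift c)
  | ret e => ret (e.shift c)
  | bind e1 e2 => bind (e1.shift c) (e2.shift (c + 1))

/-- Substitution `e[v/k]` of `v` for de Bruijn index `k` in `e`. -/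
def subst : Exp → Exp → ℕ → Exp
  | var n, v, k => if n = k then v else if k < n then var (n - 1) else var n
  | lam e, v, k => lam (e.subst (v.shift 0) (k + 1))
  | app e1 e2, v, k => app (e1.subst v k) (e2.subst v k)
  | pair e1 e2, v, k => pair (e1.subst v k) (e2.subst v k)
  | fst e, v, k => fst (e.subst v k)
  | snd e, v, k => snd (e.subst v k)
  | inl e, v, k => inl (e.subst v k)
  | inr e, v, k => inr (e.subst v k)
  | case e e1 e2, v, k =>
      case (e.subst v k) (e1.subst (v.shift 0) (k + 1)) (e2.subst (v.shift 0) (k + 1))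
  | tt, _, _ => tt
  | ff, _, _ => ff
  | unit, _, _ => unit
  | loc n, _, _ => loc n
  | new e, v, k => new (e.subst v k)
  | deref e, v, k => deref (e.subst v k)
  | assign e1 e2, v, k => assign (e1.subst v k) (e2.subst v k)
  | label e, v, k => label (e.subst v k)
  | unlabel e, v, k => unlabel (e.subst v k)
  | toLabeled e, v, k => toLabeled (e.subst v k)
  | ret e, v, k => ret (e.subst v k)
  | bind e1 e2, v, k => bind (e1.subst v k) (e2.subst (v.shift 0) (k + 1))

end Exp

/-- Heaps: locations are list indices; allocation appends. -/
abbrev Heap := List Exp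

/-! ## Values -/

/-- Values of the FG language. -/
inductive FGVal : Exp → Prop where
  | lam : FGVal (.lam e)
  | pair : FGVal v1 → FGVal v2 → FGVal (.pair v1 v2)
  | inl : FGVal v → FGVal (.inl v)
  | inr : FGVal v → FGVal (.inr v)
  | tt : FGVal .tt
  | ff : FGVal .ff
  | unit : FGVal .unit
  | loc : FGVal (.loc n)

/-- Values of the CG language (monadic expressions are suspended computations,
hence values; labeled values are values). -/
inductive CGVal : Exp → Prop where
  | lam : CGVal (.lam e)
  | pair : CGVal v1 → CGVal v2 → CGVal (.pair v1 v2)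
  | inl : CGVal v → CGVal (.inl v)
  | inr : CGVal v → CGVal (.inr v)
  | tt : CGVal .tt
  | ff : CGVal .ff
  | unit : CGVal .unit
  | loc : CGVal (.loc n)
  | label : CGVal v → CGVal (.label v)
  | ret : CGVal (.ret e)
  | bind : CGVal (.bind e1 e2)
  | unlabel : CGVal (.unlabel e)
  | toLabeled : CGVal (.toLabeled e)
  | new : CGVal (.new e)
  | deref : CGVal (.deref e)
  | assign : CGVal (.assign e1 e2)

/-! ## FG: deterministic big-step call-by-value evaluation over heaps -/

inductive FGEval : Heap → Exp → Heap → Exp → Prop where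
  | lam : FGEval h (.lam e) h (.lam e)
  | tt : FGEval h .tt h .tt
  | ff : FGEval h .ff h .ff
  | unit : FGEval h .unit h .unit
  | loc : FGEval h (.loc n) h (.loc n)
  | app : FGEval h e1 h1 (.lam e) → FGEval h1 e2 h2 v2 →
      FGEval h2 (e.subst v2 0) h3 v → FGEval h (.app e1 e2) h3 v
  | pair : FGEval h e1 h1 v1 → FGEval h1 e2 h2 v2 →
      FGEval h (.pair e1 e2) h2 (.pair v1 v2)
  | fst : FGEval h e h1 (.pair v1 v2) → FGEval h (.fst e) h1 v1
  | snd : FGEval h e h1 (.pair v1 v2) → FGEval h (.snd e) h1 v2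
  | inl : FGEval h e h1 v → FGEval h (.inl e) h1 (.inl v)
  | inr : FGEval h e h1 v → FGEval h (.inr e) h1 (.inr v)
  | caseL : FGEval h e h1 (.inl v) → FGEval h1 (e1.subst v 0) h2 w →
      FGEval h (.case e e1 e2) h2 w
  | caseR : FGEval h e h1 (.inr v) → FGEval h1 (e2.subst v 0) h2 w →
      FGEval h (.case e e1 e2) h2 w
  | new : FGEval h e h1 v → FGEval h (.new e) (h1 ++ [v]) (.loc h1.length)
  | deref : FGEval h e h1 (.loc n) → h1[n]? = some v → FGEval h (.deref e) h1 v
  | assign : FGEval h e1 h1 (.loc n) → FGEval h1 e2 h2 v →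
      FGEval h (.assign e1 e2) (h2.set n v) .unit

/-! ## CG: pure big-step evaluation (no heap) and forcing semantics over heaps -/

/-- Pure (heap-free) big-step evaluation for CG.  Monadic expressions are
suspended computations and evaluate to themselves. -/
inductive CGPure : Exp → Exp → Prop where
  | lam : CGPure (.lam e) (.lam e)
  | tt : CGPure .tt .tt
  | ff : CGPure .ff .ff
  | unit : CGPure .unit .unit
  | loc : CGPure (.loc n) (.loc n)
  | app : CGPure e1 (.lam e) → CGPure e2 v2 → CGPure (e.subst v2 0) v →
      CGPure (.app e1 e2) v
  | pair : CGPure e1 v1 → CGPure e2 v2 → CGPure (.pair e1 e2) (.pair v1 v2)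
  | fst : CGPure e (.pair v1 v2) → CGPure (.fst e) v1
  | snd : CGPure e (.pair v1 v2) → CGPure (.snd e) v2
  | inl : CGPure e v → CGPure (.inl e) (.inl v)
  | inr : CGPure e v → CGPure (.inr e) (.inr v)
  | caseL : CGPure e (.inl v) → CGPure (e1.subst v 0) w → CGPure (.case e e1 e2) w
  | caseR : CGPure e (.inr v) → CGPure (e2.subst v 0) w → CGPure (.case e e1 e2) w
  | label : CGPure e v → CGPure (.label e) (.label v)
  | ret : CGPure (.ret e) (.ret e)
  | bind : CGPure (.bind e1 e2) (.bind e1 e2)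
  | unlabel : CGPure (.unlabel e) (.unlabel e)
  | toLabeled : CGPure (.toLabeled e) (.toLabeled e)
  | new : CGPure (.new e) (.new e)
  | deref : CGPure (.deref e) (.deref e)
  | assign : CGPure (.assign e1 e2) (.assign e1 e2)

/-- Forcing semantics for CG's monadic computations: actually performs heap
reads, writes and allocations. -/
inductive CGForce : Heap → Exp → Heap → Exp → Prop where
  | ret : CGPure e (.ret e0) → CGPure e0 v → CGForce h e h v
  | bind : CGPure e (.bind e1 e2) → CGForce h e1 h1 v1 →
      CGForce h1 (e2.subst v1 0) h2 v → CGForce h e h2 v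
  | unlabel : CGPure e (.unlabel e0) → CGPure e0 (.label v) → CGForce h e h v
  | toLabeled : CGPure e (.toLabeled e0) → CGForce h e0 h1 v →
      CGForce h e h1 (.label v)
  | new : CGPure e (.new e0) → CGPure e0 v → CGForce h e (h ++ [v]) (.loc h.length)
  | deref : CGPure e (.deref e0) → CGPure e0 (.loc n) → h[n]? = some v →
      CGForce h e h v
  | assign : CGPure e (.assign e1 e2) → CGPure e1 (.loc n) → CGPure e2 v →
      CGForce h e (h.set n v) .unit

/-! ## FG types (every type constructor carries its outer security label) -/

inductive FGTy (L : Type) : Type where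
  | bool (l : L)
  | unit (l : L)
  | fn (t1 : FGTy L) (le : L) (t2 : FGTy L) (l : L)
  | prod (t1 t2 : FGTy L) (l : L)
  | sum (t1 t2 : FGTy L) (l : L)
  | ref (t : FGTy L) (l : L)

/-- The outer label of an FG type (`(A^ℓ).lab = ℓ`).
`τ.lab ≥ ℓ` is the protection judgment `τ ↘ ℓ`. -/
def FGTy.lab {L : Type} : FGTy L → L
  | .bool l => l
  | .unit l => l
  | .fn _ _ _ l => l
  | .prod _ _ l => l
  | .sum _ _ l => l
  | .ref _ l => l

/-- FG subtyping: structural, covariant in security labels, contravariant in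
the pc-label of function types, invariant in the content type of references. -/
inductive FGSub {L : Type} [Lattice L] [BoundedOrder L] : FGTy L → FGTy L → Prop where
  | bool : l ≤ l' → FGSub (.bool l) (.bool l')
  | unit : l ≤ l' → FGSub (.unit l) (.unit l')
  | fn : FGSub τ1' τ1 → le' ≤ le → FGSub τ2 τ2' → l ≤ l' →
      FGSub (.fn τ1 le τ2 l) (.fn τ1' le' τ2' l')
  | prod : FGSub τ1 τ1' → FGSub τ2 τ2' → l ≤ l' →
      FGSub (.prod τ1 τ2 l) (.prod τ1' τ2' l')
  | sum : FGSub τ1 τ1' → FGSub τ2 τ2' → l ≤ l' →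
      FGSub (.sum τ1 τ2 l) (.sum τ1' τ2' l')
  | ref : l ≤ l' → FGSub (.ref τ l) (.ref τ l')

/-- The FG typing judgment `Γ ⊢_pc e : τ`. -/
inductive FGTyped {L : Type} [Lattice L] [BoundedOrder L] :
    List (FGTy L) → L → Exp → FGTy L → Prop where
  | var : Γ[n]? = some τ → FGTyped Γ pc (.var n) τ
  | tt : FGTyped Γ pc .tt (.bool ⊥)
  | ff : FGTyped Γ pc .ff (.bool ⊥)
  | unit : FGTyped Γ pc .unit (.unit ⊥)
  | lam : FGTyped (τ1 :: Γ) le e τ2 → FGTyped Γ pc (.lam e) (.fn τ1 le τ2 ⊥)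
  | app : FGTyped Γ pc e1 (.fn τ1 le τ2 l) → FGTyped Γ pc e2 τ1 →
      l ⊔ pc ≤ le → l ≤ τ2.lab → FGTyped Γ pc (.app e1 e2) τ2
  | pair : FGTyped Γ pc e1 τ1 → FGTyped Γ pc e2 τ2 →
      FGTyped Γ pc (.pair e1 e2) (.prod τ1 τ2 ⊥)
  | fst : FGTyped Γ pc e (.prod τ1 τ2 l) → l ≤ τ1.lab → FGTyped Γ pc (.fst e) τ1
  | snd : FGTyped Γ pc e (.prod τ1 τ2 l) → l ≤ τ2.lab → FGTyped Γ pc (.snd e) τ2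
  | inl : FGTyped Γ pc e τ1 → FGTyped Γ pc (.inl e) (.sum τ1 τ2 ⊥)
  | inr : FGTyped Γ pc e τ2 → FGTyped Γ pc (.inr e) (.sum τ1 τ2 ⊥)
  | case : FGTyped Γ pc e (.sum τ1 τ2 l) → FGTyped (τ1 :: Γ) (pc ⊔ l) e1 τ →
      FGTyped (τ2 :: Γ) (pc ⊔ l) e2 τ → l ≤ τ.lab →
      FGTyped Γ pc (.case e e1 e2) τ
  | new : FGTyped Γ pc e τ → pc ≤ τ.lab → FGTyped Γ pc (.new e) (.ref τ ⊥)
  | deref : FGTyped Γ pc e (.ref τ l) → FGSub τ τ' → l ≤ τ'.lab →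
      FGTyped Γ pc (.deref e) τ'
  | assign : FGTyped Γ pc e1 (.ref τ l) → FGTyped Γ pc e2 τ →
      pc ⊔ l ≤ τ.lab → FGTyped Γ pc (.assign e1 e2) (.unit ⊥)
  | sub : FGTyped Γ pc' e τ' → FGSub τ' τ → pc ≤ pc' → FGTyped Γ pc e τ

/-! ## CG types -/

inductive CGTy (L : Type) : Type where
  | bool
  | unit
  | fn (t1 t2 : CGTy L)
  | prod (t1 t2 : CGTy L)
  | sum (t1 t2 : CGTy L)
  | ref (l : L) (t : CGTy L)
  | labeled (l : L) (t : CGTy L)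
  | monad (l1 l2 : L) (t : CGTy L)   -- CG ℓ1 ℓ2 τ : pc-label ℓ1, taint label ℓ2

/-- CG subtyping: `Labeled ℓ τ` covariant in `ℓ` and `τ`; `CG ℓ1 ℓ2 τ`
contravariant in `ℓ1`, covariant in `ℓ2` and `τ`. -/
inductive CGSub {L : Type} [Lattice L] [BoundedOrder L] : CGTy L → CGTy L → Prop where
  | bool : CGSub .bool .bool
  | unit : CGSub .unit .unit
  | fn : CGSub τ1' τ1 → CGSub τ2 τ2' → CGSub (.fn τ1 τ2) (.fn τ1' τ2')
  | prod : CGSub τ1 τ1' → CGSub τ2 τ2' → CGSub (.prod τ1 τ2) (.prod τ1' τ2')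
  | sum : CGSub τ1 τ1' → CGSub τ2 τ2' → CGSub (.sum τ1 τ2) (.sum τ1' τ2')
  | ref : CGSub (.ref l τ) (.ref l τ)
  | labeled : CGSub τ τ' → l ≤ l' → CGSub (.labeled l τ) (.labeled l' τ')
  | monad : l1' ≤ l1 → l2 ≤ l2' → CGSub τ τ' →
      CGSub (.monad l1 l2 τ) (.monad l1' l2' τ')

/-- The CG typing judgment `Γ ⊢ e : τ`. -/
inductive CGTyped {L : Type} [Lattice L] [BoundedOrder L] :
    List (CGTy L) → Exp → CGTy L → Prop where
  | var : Γ[n]? = some τ → CGTyped Γ (.var n) τ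
  | tt : CGTyped Γ .tt .bool
  | ff : CGTyped Γ .ff .bool
  | unit : CGTyped Γ .unit .unit
  | lam : CGTyped (τ1 :: Γ) e τ2 → CGTyped Γ (.lam e) (.fn τ1 τ2)
  | app : CGTyped Γ e1 (.fn τ1 τ2) → CGTyped Γ e2 τ1 → CGTyped Γ (.app e1 e2) τ2
  | pair : CGTyped Γ e1 τ1 → CGTyped Γ e2 τ2 → CGTyped Γ (.pair e1 e2) (.prod τ1 τ2)
  | fst : CGTyped Γ e (.prod τ1 τ2) → CGTyped Γ (.fst e) τ1
  | snd : CGTyped Γ e (.prod τ1 τ2) → CGTyped Γ (.snd e) τ2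
  | inl : CGTyped Γ e τ1 → CGTyped Γ (.inl e) (.sum τ1 τ2)
  | inr : CGTyped Γ e τ2 → CGTyped Γ (.inr e) (.sum τ1 τ2)
  | case : CGTyped Γ e (.sum τ1 τ2) → CGTyped (τ1 :: Γ) e1 τ →
      CGTyped (τ2 :: Γ) e2 τ → CGTyped Γ (.case e e1 e2) τ
  | ret : CGTyped Γ e τ → CGTyped Γ (.ret e) (.monad ⊤ ⊥ τ)
  | bind : CGTyped Γ e1 (.monad l1 l2 τ) → CGTyped (τ :: Γ) e2 (.monad l3 l4 τ') →
      l ≤ l1 → l ≤ l3 → l2 ≤ l3 → l2 ≤ l4 →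
      CGTyped Γ (.bind e1 e2) (.monad l l4 τ')
  | label : CGTyped Γ e τ → CGTyped Γ (.label e) (.labeled l τ)
  | unlabel : CGTyped Γ e (.labeled l τ) → CGTyped Γ (.unlabel e) (.monad ⊤ l τ)
  | new : CGTyped Γ e (.labeled l τ) → CGTyped Γ (.new e) (.monad l ⊥ (.ref l τ))
  | deref : CGTyped Γ e (.ref l' τ) → CGTyped Γ (.deref e) (.monad ⊤ ⊥ (.labeled l' τ))
  | assign : CGTyped Γ e1 (.ref l τ) → CGTyped Γ e2 (.labeled l τ) →
      CGTyped Γ (.assign e1 e2) (.monad l ⊥ .unit)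
  | toLabeled : CGTyped Γ e (.monad l l' τ) →
      CGTyped Γ (.toLabeled e) (.monad l ⊥ (.labeled l' τ))
  | sub : CGTyped Γ e τ' → CGSub τ' τ → CGTyped Γ e τ

/-! ## The CG-to-FG type translation ⟦·⟧ -/

def toFG {L : Type} [Lattice L] [BoundedOrder L] : CGTy L → FGTy L
  | .bool => .bool ⊥
  | .unit => .unit ⊥
  | .fn τ1 τ2 => .fn (toFG τ1) ⊤ (toFG τ2) ⊥
  | .prod τ1 τ2 => .prod (toFG τ1) (toFG τ2) ⊥
  | .sum τ1 τ2 => .sum (toFG τ1) (toFG τ2) ⊥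
  | .ref l τ => .ref (.sum (toFG τ) (.unit ⊥) l) ⊥
  | .labeled l τ => .sum (toFG τ) (.unit ⊥) l
  | .monad l1 l2 τ => .fn (.unit ⊥) l1 (.sum (toFG τ) (.unit ⊥) l2) ⊥

/-! ## The FG-to-CG type translation: ⟦A^ℓ⟧ = Labeled ℓ ⟨A⟩ -/

/-- `⟨A⟩`: translation of the unlabeled part of an FG type. -/
def trA {L : Type} [Lattice L] [BoundedOrder L] : FGTy L → CGTy L
  | .bool _ => .bool
  | .unit _ => .unit
  | .fn τ1 le τ2 _ =>
      .fn (.labeled τ1.lab (trA τ1)) (.monad le ⊥ (.labeled τ2.lab (trA τ2)))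
  | .prod τ1 τ2 _ => .prod (.labeled τ1.lab (trA τ1)) (.labeled τ2.lab (trA τ2))
  | .sum τ1 τ2 _ => .sum (.labeled τ1.lab (trA τ1)) (.labeled τ2.lab (trA τ2))
  | .ref τ _ => .ref τ.lab (trA τ)

/-- `⟦A^ℓ⟧ = Labeled ℓ ⟨A⟩`. -/
def toCG {L : Type} [Lattice L] [BoundedOrder L] (τ : FGTy L) : CGTy L :=
  .labeled τ.lab (trA τ)

/-! ## CG-to-FG expression translation `Γ ⊢ e : τ ⇝ e_F` -/

inductive CG2FG {L : Type} [Lattice L] [BoundedOrder L] :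
    List (CGTy L) → Exp → CGTy L → Exp → Prop where
  | var : Γ[n]? = some τ → CG2FG Γ (.var n) τ (.var n)
  | tt : CG2FG Γ .tt .bool .tt
  | ff : CG2FG Γ .ff .bool .ff
  | unit : CG2FG Γ .unit .unit .unit
  | lam : CG2FG (τ1 :: Γ) e τ2 eF → CG2FG Γ (.lam e) (.fn τ1 τ2) (.lam eF)
  | app : CG2FG Γ e1 (.fn τ1 τ2) eF1 → CG2FG Γ e2 τ1 eF2 →
      CG2FG Γ (.app e1 e2) τ2 (.app eF1 eF2)
  | pair : CG2FG Γ e1 τ1 eF1 → CG2FG Γ e2 τ2 eF2 →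
      CG2FG Γ (.pair e1 e2) (.prod τ1 τ2) (.pair eF1 eF2)
  | fst : CG2FG Γ e (.prod τ1 τ2) eF → CG2FG Γ (.fst e) τ1 (.fst eF)
  | snd : CG2FG Γ e (.prod τ1 τ2) eF → CG2FG Γ (.snd e) τ2 (.snd eF)
  | inl : CG2FG Γ e τ1 eF → CG2FG Γ (.inl e) (.sum τ1 τ2) (.inl eF)
  | inr : CG2FG Γ e τ2 eF → CG2FG Γ (.inr e) (.sum τ1 τ2) (.inr eF)
  | case : CG2FG Γ e (.sum τ1 τ2) eF → CG2FG (τ1 :: Γ) e1 τ eF1 →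
      CG2FG (τ2 :: Γ) e2 τ eF2 → CG2FG Γ (.case e e1 e2) τ (.case eF eF1 eF2)
  | label : CG2FG Γ e τ eF → CG2FG Γ (.label e) (.labeled l τ) (.inl eF)
  | unlabel : CG2FG Γ e (.labeled l τ) eF →
      CG2FG Γ (.unlabel e) (.monad ⊤ l τ) (.lam (eF.shift 0))
  | toLabeled : CG2FG Γ e (.monad l1 l2 τ) eF →
      CG2FG Γ (.toLabeled e) (.monad l1 ⊥ (.labeled l2 τ))
        (.lam (.inl (.app (eF.shift 0) .unit)))
  | ret : CG2FG Γ e τ eF → CG2FG Γ (.ret e) (.monad ⊤ ⊥ τ) (.lam (.inl (eF.shift 0)))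
  | bind : CG2FG Γ e1 (.monad l1 l2 τ) eF1 →
      CG2FG (τ :: Γ) e2 (.monad l3 l4 τ') eF2 →
      l ≤ l1 → l ≤ l3 → l2 ≤ l3 → l2 ≤ l4 →
      CG2FG Γ (.bind e1 e2) (.monad l l4 τ')
        (.lam (.case (.app (eF1.shift 0) .unit) (.app (eF2.shift 1) .unit)
          (.inr .unit)))
  | new : CG2FG Γ e (.labeled l τ) eF →
      CG2FG Γ (.new e) (.monad l ⊥ (.ref l τ)) (.lam (.inl (.new (eF.shift 0))))
  | deref : CG2FG Γ e (.ref l' τ) eF →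
      CG2FG Γ (.deref e) (.monad ⊤ ⊥ (.labeled l' τ))
        (.lam (.inl (.deref (eF.shift 0))))
  | assign : CG2FG Γ e1 (.ref l τ) eF1 → CG2FG Γ e2 (.labeled l τ) eF2 →
      CG2FG Γ (.assign e1 e2) (.monad l ⊥ .unit)
        (.lam (.inl (.assign (eF1.shift 0) (eF2.shift 0))))
  | sub : CG2FG Γ e τ' eF → CGSub τ' τ → CG2FG Γ e τ eF

/-! ## FG-to-CG expression translation `Γ ⊢_pc e : τ ⇝ e_c` -/

/-- `coerce_taint ≜ λx. toLabeled(bind(x, y. unlabel y))`. -/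
def coerceTaint : Exp := .lam (.toLabeled (.bind (.var 0) (.unlabel (.var 0))))

inductive FG2CG {L : Type} [Lattice L] [BoundedOrder L] :
    List (FGTy L) → L → Exp → FGTy L → Exp → Prop where
  | var : Γ[n]? = some τ → FG2CG Γ pc (.var n) τ (.ret (.var n))
  | tt : FG2CG Γ pc .tt (.bool ⊥) (.ret (.label .tt))
  | ff : FG2CG Γ pc .ff (.bool ⊥) (.ret (.label .ff))
  | unit : FG2CG Γ pc .unit (.unit ⊥) (.ret (.label .unit))
  | lam : FG2CG (τ1 :: Γ) le e τ2 ec →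
      FG2CG Γ pc (.lam e) (.fn τ1 le τ2 ⊥) (.ret (.label (.lam ec)))
  | app : FG2CG Γ pc e1 (.fn τ1 le τ2 l) ec1 → FG2CG Γ pc e2 τ1 ec2 →
      l ⊔ pc ≤ le → l ≤ τ2.lab →
      FG2CG Γ pc (.app e1 e2) τ2
        (.app coerceTaint
          (.bind ec1 (.bind (ec2.shift 0)
            (.bind (.unlabel (.var 1)) (.app (.var 0) (.var 1))))))
  | pair : FG2CG Γ pc e1 τ1 ec1 → FG2CG Γ pc e2 τ2 ec2 →
      FG2CG Γ pc (.pair e1 e2) (.prod τ1 τ2 ⊥)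
        (.bind ec1 (.bind (ec2.shift 0) (.ret (.label (.pair (.var 1) (.var 0))))))
  | fst : FG2CG Γ pc e (.prod τ1 τ2 l) ec → l ≤ τ1.lab →
      FG2CG Γ pc (.fst e) τ1
        (.app coerceTaint
          (.bind ec (.bind (.unlabel (.var 0)) (.ret (.fst (.var 0))))))
  | snd : FG2CG Γ pc e (.prod τ1 τ2 l) ec → l ≤ τ2.lab →
      FG2CG Γ pc (.snd e) τ2
        (.app coerceTaint
          (.bind ec (.bind (.unlabel (.var 0)) (.ret (.snd (.var 0))))))
  | inl : FG2CG Γ pc e τ1 ec →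
      FG2CG Γ pc (.inl e) (.sum τ1 τ2 ⊥) (.bind ec (.ret (.label (.inl (.var 0)))))
  | inr : FG2CG Γ pc e τ2 ec →
      FG2CG Γ pc (.inr e) (.sum τ1 τ2 ⊥) (.bind ec (.ret (.label (.inr (.var 0)))))
  | case : FG2CG Γ pc e (.sum τ1 τ2 l) ec →
      FG2CG (τ1 :: Γ) (pc ⊔ l) e1 τ ec1 → FG2CG (τ2 :: Γ) (pc ⊔ l) e2 τ ec2 →
      l ≤ τ.lab →
      FG2CG Γ pc (.case e e1 e2) τ
        (.app coerceTaint
          (.bind ec (.bind (.unlabel (.var 0))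
            (.case (.var 0) ((ec1.shift 1).shift 1) ((ec2.shift 1).shift 1)))))
  | new : FG2CG Γ pc e τ ec → pc ≤ τ.lab →
      FG2CG Γ pc (.new e) (.ref τ ⊥)
        (.bind ec (.bind (.new (.var 0)) (.ret (.label (.var 0)))))
  | deref : FG2CG Γ pc e (.ref τ l) ec → FGSub τ τ' → l ≤ τ'.lab →
      FG2CG Γ pc (.deref e) τ'
        (.app coerceTaint
          (.bind ec (.bind (.unlabel (.var 0)) (.deref (.var 0)))))
  | assign : FG2CG Γ pc e1 (.ref τ l) ec1 → FG2CG Γ pc e2 τ ec2 →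
      pc ⊔ l ≤ τ.lab →
      FG2CG Γ pc (.assign e1 e2) (.unit ⊥)
        (.bind (.toLabeled (.bind ec1 (.bind (ec2.shift 0)
          (.bind (.unlabel (.var 1)) (.assign (.var 0) (.var 1))))))
          (.ret (.label .unit)))
  | sub : FG2CG Γ pc' e τ' ec → FGSub τ' τ → pc ≤ pc' → FG2CG Γ pc e τ ec

/-! ### Erased types and the erased typing judgment -/

/-- CG types with all security labels removed. -/
inductive ETy : Type where
  | bool
  | unit
  | fn (t1 t2 : ETy)
  | prod (t1 t2 : ETy)
  | sum (t1 t2 : ETy)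
  | ref (t : ETy)
  | labeled (t : ETy)
  | monad (t : ETy)

/-- Remove all security labels from a CG type. -/
def CGTy.erase {L : Type} : CGTy L → ETy
  | .bool => .bool
  | .unit => .unit
  | .fn t1 t2 => .fn t1.erase t2.erase
  | .prod t1 t2 => .prod t1.erase t2.erase
  | .sum t1 t2 => .sum t1.erase t2.erase
  | .ref _ t => .ref t.erase
  | .labeled _ t => .labeled t.erase
  | .monad _ _ t => .monad t.erase

/-- Label-free typing relative to a store typing `S`. A location `n` has type `ref τ` when
`S[n]? = some τ`; the heap cell itself then holds a value of type `labeled τ`. -/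
inductive ETyped (S : List ETy) : List ETy → Exp → ETy → Prop where
  | var : Γ[n]? = some τ → ETyped S Γ (.var n) τ
  | loc : S[n]? = some τ → ETyped S Γ (.loc n) (.ref τ)
  | tt : ETyped S Γ .tt .bool
  | ff : ETyped S Γ .ff .bool
  | unit : ETyped S Γ .unit .unit
  | lam : ETyped S (τ1 :: Γ) e τ2 → ETyped S Γ (.lam e) (.fn τ1 τ2)
  | app : ETyped S Γ e1 (.fn τ1 τ2) → ETyped S Γ e2 τ1 → ETyped S Γ (.app e1 e2) τ2
  | pair : ETyped S Γ e1 τ1 → ETyped S Γ e2 τ2 → ETyped S Γ (.pair e1 e2) (.prod τ1 τ2)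
  | fst : ETyped S Γ e (.prod τ1 τ2) → ETyped S Γ (.fst e) τ1
  | snd : ETyped S Γ e (.prod τ1 τ2) → ETyped S Γ (.snd e) τ2
  | inl : ETyped S Γ e τ1 → ETyped S Γ (.inl e) (.sum τ1 τ2)
  | inr : ETyped S Γ e τ2 → ETyped S Γ (.inr e) (.sum τ1 τ2)
  | case : ETyped S Γ e (.sum τ1 τ2) → ETyped S (τ1 :: Γ) e1 τ →
      ETyped S (τ2 :: Γ) e2 τ → ETyped S Γ (.case e e1 e2) τ
  | ret : ETyped S Γ e τ → ETyped S Γ (.ret e) (.monad τ)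
  | bind : ETyped S Γ e1 (.monad τ) → ETyped S (τ :: Γ) e2 (.monad τ') →
      ETyped S Γ (.bind e1 e2) (.monad τ')
  | label : ETyped S Γ e τ → ETyped S Γ (.label e) (.labeled τ)
  | unlabel : ETyped S Γ e (.labeled τ) → ETyped S Γ (.unlabel e) (.monad τ)
  | new : ETyped S Γ e (.labeled τ) → ETyped S Γ (.new e) (.monad (.ref τ))
  | deref : ETyped S Γ e (.ref τ) → ETyped S Γ (.deref e) (.monad (.labeled τ))
  | assign : ETyped S Γ e1 (.ref τ) → ETyped S Γ e2 (.labeled τ) →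
      ETyped S Γ (.assign e1 e2) (.monad .unit)
  | toLabeled : ETyped S Γ e (.monad τ) → ETyped S Γ (.toLabeled e) (.monad (.labeled τ))

theorem CGSub.erase_eq {L : Type} [Lattice L] [BoundedOrder L] {τ τ' : CGTy L}
    (h : CGSub τ τ') : τ.erase = τ'.erase := by
  induction h <;> simp_all [CGTy.erase]

theorem CGTyped.erase {L : Type} [Lattice L] [BoundedOrder L] {Γ : List (CGTy L)} {e : Exp}
    {τ : CGTy L} (S : List ETy) (h : CGTyped Γ e τ) :
    ETyped S (Γ.map CGTy.erase) e τ.erase := by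
  induction h with
  | var h => exact .var (by simp [h])
  | tt => exact .tt
  | ff => exact .ff
  | unit => exact .unit
  | lam _ ih => exact .lam ih
  | app _ _ ih1 ih2 => exact .app ih1 ih2
  | pair _ _ ih1 ih2 => exact .pair ih1 ih2
  | fst _ ih => exact .fst ih
  | snd _ ih => exact .snd ih
  | inl _ ih => exact .inl ih
  | inr _ ih => exact .inr ih
  | case _ _ _ ih ih1 ih2 => exact .case ih ih1 ih2
  | ret _ ih => exact .ret ih
  | bind _ _ _ _ _ _ ih1 ih2 => exact .bind ih1 ih2
  | label _ ih => exact .label ih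
  | unlabel _ ih => exact .unlabel ih
  | new _ ih => exact .new ih
  | deref _ ih => exact .deref ih
  | assign _ _ ih1 ih2 => exact .assign ih1 ih2
  | toLabeled _ ih => exact .toLabeled ih
  | sub _ hs ih => exact hs.erase_eq ▸ ih

/-! ### Weakening and substitution -/

theorem ETyped.store_mono {S S' Γ : List ETy} {e : Exp} {τ : ETy} (hS : S <+: S')
    (h : ETyped S Γ e τ) : ETyped S' Γ e τ := by
  induction h with
  | loc h =>
    obtain ⟨T, rfl⟩ := hS
    obtain ⟨hlt, _⟩ := List.getElem?_eq_some_iff.1 h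
    exact .loc (by rw [List.getElem?_append_left hlt, h])
  | var h => exact .var h
  | _ => constructor <;> assumption

/-- `Γ'` is `Γ` with one extra entry inserted at position `c`. -/
def CtxInsert (c : ℕ) (Γ Γ' : List ETy) : Prop :=
  (∀ n, n < c → Γ'[n]? = Γ[n]?) ∧ ∀ n, c ≤ n → Γ'[n + 1]? = Γ[n]?

theorem CtxInsert.cons {c : ℕ} {Γ Γ' : List ETy} (h : CtxInsert c Γ Γ') (σ : ETy) :
    CtxInsert (c + 1) (σ :: Γ) (σ :: Γ') := by
  constructor
  · rintro (_ | n) hn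
    · simp
    · simpa using h.1 n (by omega)
  · rintro (_ | n) hn
    · omega
    · simpa using h.2 n (by omega)

theorem ETyped.shift {S Γ : List ETy} {e : Exp} {τ : ETy} (h : ETyped S Γ e τ) :
    ∀ {c : ℕ} {Γ' : List ETy}, CtxInsert c Γ Γ' → ETyped S Γ' (e.shift c) τ := by
  induction h with
  | var h =>
    intro c Γ' hc
    simp only [Exp.shift]
    split_ifs with hn
    · exact .var (by rw [hc.1 _ hn, h])
    · exact .var (by rw [hc.2 _ (by omega), h])
  | loc h => intro _ _ _; exact .loc h
  | tt => intro _ _ _; exact .tt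
  | ff => intro _ _ _; exact .ff
  | unit => intro _ _ _; exact .unit
  | lam _ ih => intro _ _ hc; exact .lam (ih (hc.cons _))
  | app _ _ ih1 ih2 => intro _ _ hc; exact .app (ih1 hc) (ih2 hc)
  | pair _ _ ih1 ih2 => intro _ _ hc; exact .pair (ih1 hc) (ih2 hc)
  | fst _ ih => intro _ _ hc; exact .fst (ih hc)
  | snd _ ih => intro _ _ hc; exact .snd (ih hc)
  | inl _ ih => intro _ _ hc; exact .inl (ih hc)
  | inr _ ih => intro _ _ hc; exact .inr (ih hc)
  | case _ _ _ ih ih1 ih2 =>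
    intro _ _ hc; exact .case (ih hc) (ih1 (hc.cons _)) (ih2 (hc.cons _))
  | ret _ ih => intro _ _ hc; exact .ret (ih hc)
  | bind _ _ ih1 ih2 => intro _ _ hc; exact .bind (ih1 hc) (ih2 (hc.cons _))
  | label _ ih => intro _ _ hc; exact .label (ih hc)
  | unlabel _ ih => intro _ _ hc; exact .unlabel (ih hc)
  | new _ ih => intro _ _ hc; exact .new (ih hc)
  | deref _ ih => intro _ _ hc; exact .deref (ih hc)
  | assign _ _ ih1 ih2 => intro _ _ hc; exact .assign (ih1 hc) (ih2 hc)
  | toLabeled _ ih => intro _ _ hc; exact .toLabeled (ih hc)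

theorem ETyped.shift_zero {S Γ : List ETy} {e : Exp} {τ : ETy} (h : ETyped S Γ e τ) (σ : ETy) :
    ETyped S (σ :: Γ) (e.shift 0) τ :=
  h.shift ⟨fun _ hn => absurd hn (Nat.not_lt_zero _), fun _ _ => by simp⟩

/-- Substitution lemma: here `Γ` is `Γ'` with the entry `σ` inserted at position `k`. -/
theorem ETyped.subst {S Γ : List ETy} {e : Exp} {τ σ : ETy} (h : ETyped S Γ e τ) :
    ∀ {k : ℕ} {Γ' : List ETy} {v : Exp}, CtxInsert k Γ' Γ → Γ[k]? = some σ →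
      ETyped S Γ' v σ → ETyped S Γ' (e.subst v k) τ := by
  induction h with
  | @var Γ n τ h =>
    intro k Γ' v hc hk hv
    simp only [Exp.subst]
    split_ifs with h1 h2
    · subst h1
      rw [h] at hk
      cases hk
      exact hv
    · obtain ⟨m, rfl⟩ : ∃ m, n = m + 1 := ⟨n - 1, by omega⟩
      exact .var (by rw [Nat.add_sub_cancel, ← hc.2 m (by omega), h])
    · exact .var (by rw [← hc.1 n (by omega), h])
  | loc h => intro _ _ _ _ _ _; exact .loc h
  | tt => intro _ _ _ _ _ _; exact .tt
  | ff => intro _ _ _ _ _ _; exact .ff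
  | unit => intro _ _ _ _ _ _; exact .unit
  | lam _ ih => intro _ _ _ hc hk hv; exact .lam (ih (hc.cons _) (by simpa) (hv.shift_zero _))
  | app _ _ ih1 ih2 => intro _ _ _ hc hk hv; exact .app (ih1 hc hk hv) (ih2 hc hk hv)
  | pair _ _ ih1 ih2 => intro _ _ _ hc hk hv; exact .pair (ih1 hc hk hv) (ih2 hc hk hv)
  | fst _ ih => intro _ _ _ hc hk hv; exact .fst (ih hc hk hv)
  | snd _ ih => intro _ _ _ hc hk hv; exact .snd (ih hc hk hv)
  | inl _ ih => intro _ _ _ hc hk hv; exact .inl (ih hc hk hv)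
  | inr _ ih => intro _ _ _ hc hk hv; exact .inr (ih hc hk hv)
  | case _ _ _ ih ih1 ih2 =>
    intro _ _ _ hc hk hv
    exact .case (ih hc hk hv) (ih1 (hc.cons _) (by simpa) (hv.shift_zero _))
      (ih2 (hc.cons _) (by simpa) (hv.shift_zero _))
  | ret _ ih => intro _ _ _ hc hk hv; exact .ret (ih hc hk hv)
  | bind _ _ ih1 ih2 =>
    intro _ _ _ hc hk hv
    exact .bind (ih1 hc hk hv) (ih2 (hc.cons _) (by simpa) (hv.shift_zero _))
  | label _ ih => intro _ _ _ hc hk hv; exact .label (ih hc hk hv)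
  | unlabel _ ih => intro _ _ _ hc hk hv; exact .unlabel (ih hc hk hv)
  | new _ ih => intro _ _ _ hc hk hv; exact .new (ih hc hk hv)
  | deref _ ih => intro _ _ _ hc hk hv; exact .deref (ih hc hk hv)
  | assign _ _ ih1 ih2 => intro _ _ _ hc hk hv; exact .assign (ih1 hc hk hv) (ih2 hc hk hv)
  | toLabeled _ ih => intro _ _ _ hc hk hv; exact .toLabeled (ih hc hk hv)

theorem ETyped.subst_zero {S Γ : List ETy} {e v : Exp} {τ σ : ETy}
    (h : ETyped S (σ :: Γ) e τ) (hv : ETyped S Γ v σ) : ETyped S Γ (e.subst v 0) τ :=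
  h.subst ⟨fun _ hn => absurd hn (Nat.not_lt_zero _), fun _ _ => by simp⟩ (by simp) hv

/-! ### Preservation -/

theorem ETyped.pure {S Γ : List ETy} {e v : Exp} (hp : CGPure e v) :
    ∀ {τ : ETy}, ETyped S Γ e τ → ETyped S Γ v τ := by
  induction hp with
  | app _ _ _ ih1 ih2 ih3 =>
    intro τ h
    cases h with
    | app h1 h2 => cases ih1 h1 with | lam hb => exact ih3 (hb.subst_zero (ih2 h2))
  | pair _ _ ih1 ih2 => intro τ h; cases h with | pair h1 h2 => exact .pair (ih1 h1) (ih2 h2)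
  | fst _ ih => intro τ h; cases h with | fst h => cases ih h with | pair h1 h2 => exact h1
  | snd _ ih => intro τ h; cases h with | snd h => cases ih h with | pair h1 h2 => exact h2
  | inl _ ih => intro τ h; cases h with | inl h => exact .inl (ih h)
  | inr _ ih => intro τ h; cases h with | inr h => exact .inr (ih h)
  | caseL _ _ ih ih' =>
    intro τ h
    cases h with | case h h1 h2 => cases ih h with | inl hv => exact ih' (h1.subst_zero hv)
  | caseR _ _ ih ih' =>
    intro τ h
    cases h with | case h h1 h2 => cases ih h with | inr hv => exact ih' (h2.subst_zero hv)
  | label _ ih => intro τ h; cases h with | label h => exact .label (ih h)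
  | _ => exact id

/-- The heap `h` matches the store typing `S`: cell `n` holds a closed expression of type
`labeled τ`, where `τ` is the `n`-th entry of `S`. -/
def HeapOK (S : List ETy) (h : Heap) : Prop :=
  S.length = h.length ∧
    ∀ (n : ℕ) τ v, S[n]? = some τ → h[n]? = some v → ETyped S [] v (.labeled τ)

theorem HeapOK.append {S : List ETy} {h : Heap} {τ : ETy} {v : Exp} (hh : HeapOK S h)
    (hv : ETyped S [] v (.labeled τ)) : HeapOK (S ++ [τ]) (h ++ [v]) := by
  refine ⟨by simp [hh.1], fun n σ w hn hw => ETyped.store_mono (List.prefix_append _ _) ?_⟩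
  rcases lt_trichotomy n S.length with hlt | heq | hgt
  · rw [List.getElem?_append_left hlt] at hn
    rw [List.getElem?_append_left (hh.1 ▸ hlt)] at hw
    exact hh.2 n σ w hn hw
  · have heq' : n = h.length := heq.trans hh.1
    rw [heq, List.getElem?_concat_length] at hn
    rw [heq', List.getElem?_concat_length] at hw
    cases hn
    cases hw
    exact hv
  · rw [List.getElem?_eq_none (by simp; omega)] at hn
    cases hn

theorem HeapOK.set {S : List ETy} {h : Heap} {τ : ETy} {v : Exp} {n : ℕ} (hh : HeapOK S h)
    (hn : S[n]? = some τ) (hv : ETyped S [] v (.labeled τ)) : HeapOK S (h.set n v) := by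
  refine ⟨by simp [hh.1], fun m σ w hm hw => ?_⟩
  rw [List.getElem?_set] at hw
  split_ifs at hw with h1 h2
  · subst h1
    rw [hn] at hm
    cases hm
    cases hw
    exact hv
  · exact hh.2 m σ w hm hw

/-- Preservation for forcing: the final heap and result are typed by some extension of the
initial store typing. -/
theorem ETyped.force {h h' : Heap} {e v : Exp} (hf : CGForce h e h' v) :
    ∀ {S : List ETy} {τ : ETy}, HeapOK S h → ETyped S [] e (.monad τ) →
      ∃ S', S <+: S' ∧ HeapOK S' h' ∧ ETyped S' [] v τ := by
  induction hf with
  | ret hp hp0 =>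
    intro S τ hh ht
    cases ht.pure hp with | ret h0 => exact ⟨S, List.prefix_rfl, hh, h0.pure hp0⟩
  | bind hp _ _ ih1 ih2 =>
    intro S τ hh ht
    cases ht.pure hp with
    | bind t1 t2 =>
      obtain ⟨S1, hS1, hh1, hv1⟩ := ih1 hh t1
      obtain ⟨S2, hS2, hh2, hv2⟩ := ih2 hh1 ((t2.store_mono hS1).subst_zero hv1)
      exact ⟨S2, hS1.trans hS2, hh2, hv2⟩
  | unlabel hp hp0 =>
    intro S τ hh ht
    cases ht.pure hp with
    | unlabel h0 => cases h0.pure hp0 with | label hv => exact ⟨S, List.prefix_rfl, hh, hv⟩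
  | toLabeled hp _ ih =>
    intro S τ hh ht
    cases ht.pure hp with
    | toLabeled h0 =>
      obtain ⟨S', hS, hh', hv⟩ := ih hh h0
      exact ⟨S', hS, hh', .label hv⟩
  | new hp hp0 =>
    intro S τ hh ht
    cases ht.pure hp with
    | new h0 =>
      exact ⟨_, List.prefix_append _ _, hh.append (h0.pure hp0),
        .loc (by rw [← hh.1, List.getElem?_concat_length])⟩
  | deref hp hp0 hv =>
    intro S τ hh ht
    cases ht.pure hp with
    | deref h0 =>
      cases h0.pure hp0 with | loc hl => exact ⟨S, List.prefix_rfl, hh, hh.2 _ _ _ hl hv⟩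
  | assign hp hp1 hp2 =>
    intro S τ hh ht
    cases ht.pure hp with
    | assign t1 t2 =>
      cases t1.pure hp1 with
      | loc hl => exact ⟨S, List.prefix_rfl, hh.set hl (t2.pure hp2), .unit⟩

/-! ### Results of evaluation are values -/

theorem CGPure.val {e v : Exp} (hp : CGPure e v) : CGVal v := by
  induction hp with
  | app _ _ _ _ _ ih => exact ih
  | pair _ _ ih1 ih2 => exact .pair ih1 ih2
  | fst _ ih => cases ih with | pair h1 h2 => exact h1
  | snd _ ih => cases ih with | pair h1 h2 => exact h2
  | inl _ ih => exact .inl ih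
  | inr _ ih => exact .inr ih
  | caseL _ _ _ ih => exact ih
  | caseR _ _ _ ih => exact ih
  | label _ ih => exact .label ih
  | _ => constructor

theorem CGForce.val {h h' : Heap} {e v : Exp} (hf : CGForce h e h' v) :
    (∀ w ∈ h, CGVal w) → (∀ w ∈ h', CGVal w) ∧ CGVal v := by
  induction hf with
  | ret _ hp0 => exact fun hh => ⟨hh, hp0.val⟩
  | bind _ _ _ ih1 ih2 => exact fun hh => ih2 (ih1 hh).1
  | unlabel _ hp0 => exact fun hh => ⟨hh, by cases hp0.val with | label hv => exact hv⟩
  | toLabeled _ _ ih => exact fun hh => ⟨(ih hh).1, .label (ih hh).2⟩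
  | new _ hp0 =>
    refine fun hh => ⟨fun w hw => ?_, .loc⟩
    rcases List.mem_append.1 hw with hw | hw
    · exact hh w hw
    · rw [List.mem_singleton.1 hw]
      exact hp0.val
  | deref _ _ hv => exact fun hh => ⟨hh, hh _ (List.mem_of_getElem? hv)⟩
  | assign _ _ hp2 =>
    refine fun hh => ⟨fun w hw => ?_, .unit⟩
    rcases List.mem_or_eq_of_mem_set hw with hw | rfl
    · exact hh w hw
    · exact hp2.val

/-! ## STATEMENT 10: Type soundness of CG's forcing semantics at base type -/

theorem cg_type_soundness_bool
    {L : Type} [Lattice L] [BoundedOrder L]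
    (l1 l2 : L) (e : Exp) (h : Heap) (v : Exp)
    (hty : CGTyped ([] : List (CGTy L)) e (CGTy.monad l1 l2 CGTy.bool))
    (hrun : CGForce [] e h v) :
    v = Exp.tt ∨ v = Exp.ff := by
  obtain ⟨S', -, -, hv⟩ :=
    ETyped.force hrun (S := []) (τ := .bool) ⟨rfl, by simp⟩ (hty.erase [])
  have hval := (hrun.val (by simp)).2
  cases hval <;> cases hv
  · exact Or.inl rfl
  · exact Or.inr rfl
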